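/- arXiv:2010.09833 — 4 statements merged into one kernel-verified Lean document; each statement's English description precedes it below -/
import Mathlib

section
/- Let μ₁ and μ₂ be probability measures on a measurable space (E, ℰ) that are both absolutely continuous with respect to a σ-finite measure ν, and let D′ ∈ ℰ. Then ∫_{D′} min(dμ₁/dμ₂, 1) dμ₂ ≥ ∫_{D′} min(dμ₁/dν, dμ₂/dν) dν, where dμ₁/dμ₂ denotes the Radon–Nikodym derivative of the absolutely continuous part of μ₁ with respect to μ₂, and dμᵢ/dν are the Radon–Nikodym densities. In particular, positivity of the right-hand side (the dominated form of the Markov–Dobrushin constant) is sufficient for the local Markov–Dobrushin condition. -/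
open MeasureTheory
open scoped ENNReal

/-- If `μ₁, μ₂ ≪ ν` with `ν` σ-finite, then for every measurable set `D'` the local
Markov–Dobrushin overlap `∫_{D'} min(dμ₁/dμ₂, 1) dμ₂` is bounded below by the dominated form
`∫_{D'} min(dμ₁/dν, dμ₂/dν) dν`. In particular, positivity of the latter suffices for the
local Markov–Dobrushin condition. -/
theorem markov_dobrushin_dominated_lower_bound
    {E : Type*} [MeasurableSpace E]
    (μ₁ μ₂ ν : Measure E) [IsProbabilityMeasure μ₁] [IsProbabilityMeasure μ₂]
    [SigmaFinite ν] (h₁ : μ₁ ≪ ν) (h₂ : μ₂ ≪ ν)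
    {D' : Set E} (hD' : MeasurableSet D') :
    ∫⁻ x in D', min (μ₁.rnDeriv ν x) (μ₂.rnDeriv ν x) ∂ν ≤
      ∫⁻ x in D', min (μ₁.rnDeriv μ₂ x) 1 ∂μ₂ := by
  rw [← setLIntegral_rnDeriv_mul h₂ (by fun_prop) hD']
  refine lintegral_mono_ae (ae_restrict_of_ae ?_)
  filter_upwards [Measure.ae_rnDeriv_ne_zero_imp_of_ae ν
    (Measure.rnDeriv_mul_rnDeriv' (μ := μ₁) h₂)] with x hx
  by_cases h0 : μ₂.rnDeriv ν x = 0
  · simp [h0]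
  · rw [mul_min, mul_one, ← hx h0, Pi.mul_apply, mul_comm]
end

section
/- Let μ₁ and μ₂ be finite measures on a measurable space (E, ℰ) and let Γ ∈ ℰ. Suppose that the restriction of μ₁ to Γ is absolutely continuous with respect to the restriction of μ₂ to Γ, with density f = dμ₁/dμ₂ satisfying f ≤ N μ₂-almost everywhere on Γ for some constant N > 0. Then the absolutely continuous part μ̃₂ of μ₂ with respect to μ₁ satisfies dμ̃₂/dμ₁ ≥ 1/N μ₁-almost everywhere on Γ. -/
open MeasureTheory
open scoped ENNReal

/-- Restricting both measures to a measurable set does not change the Radon-Nikodym derivative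
on that set. -/
theorem rnDeriv_restrict_restrict_ae_eq {E : Type*} [MeasurableSpace E] (μ ν : Measure E)
    [SigmaFinite μ] [SigmaFinite ν] {s : Set E} (hs : MeasurableSet s) :
    (μ.restrict s).rnDeriv (ν.restrict s) =ᵐ[ν.restrict s] μ.rnDeriv ν := by
  have h_sing : ν.restrict s ⟂ₘ ν.restrict sᶜ :=
    ⟨sᶜ, hs.compl, by simp [hs], by simp [hs]⟩
  have h_right := Measure.rnDeriv_add_right_of_mutuallySingular (μ := μ.restrict s) h_sing
  rw [Measure.restrict_add_restrict_compl hs] at h_right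
  filter_upwards [h_right, ae_restrict_of_ae (Measure.rnDeriv_restrict μ ν hs),
    ae_restrict_mem hs] with x hx hx_ind hxs
  rw [← hx, hx_ind, Set.indicator_of_mem hxs]

/-- A one-sided density bound yields a lower bound in the reverse direction: if on `Γ` the
measure `μ₁` is absolutely continuous with respect to `μ₂` with density `f = dμ₁/dμ₂ ≤ N`
(`μ₂`-a.e. on `Γ`), then the absolutely continuous part `μ̃₂` of `μ₂` with respect to `μ₁`
satisfies `dμ̃₂/dμ₁ ≥ 1/N` `μ₁`-a.e. on `Γ` (Mathlib's `Measure.rnDeriv` is the derivative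
of the absolutely continuous part in the Lebesgue decomposition). -/
theorem reverse_density_lower_bound
    {E : Type*} [MeasurableSpace E]
    (μ₁ μ₂ : Measure E) [IsFiniteMeasure μ₁] [IsFiniteMeasure μ₂]
    {Γ : Set E} (hΓ : MeasurableSet Γ)
    (N : ℝ≥0∞) (hN : 0 < N)
    (hac : μ₁.restrict Γ ≪ μ₂.restrict Γ)
    (hbound : ∀ᵐ x ∂(μ₂.restrict Γ), (μ₁.restrict Γ).rnDeriv (μ₂.restrict Γ) x ≤ N) :
    ∀ᵐ x ∂(μ₁.restrict Γ), N⁻¹ ≤ μ₂.rnDeriv μ₁ x := by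
  filter_upwards [hac.ae_le hbound, Measure.inv_rnDeriv hac,
    rnDeriv_restrict_restrict_ae_eq μ₂ μ₁ hΓ] with x hx hx_inv hx_restrict
  rw [← hx_restrict, ← hx_inv, Pi.inv_apply]
  exact ENNReal.inv_le_inv.mpr hx
end

section
/- Let (Z, 𝒵) and (E, ℰ) be measurable spaces, let η be a Markov kernel from Z to E, let ν be a probability measure on Z, and let μ₁ be a probability measure on E. Denote by νη the mixture measure A ↦ ∫_Z η(z, A) ν(dz) on E. Then ∫_E min(d(νη)/dμ₁, 1) dμ₁ ≥ ∫_Z ( ∫_E min(dη(z,·)/dμ₁, 1) dμ₁ ) ν(dz), where d α/dμ₁ denotes the Radon–Nikodym derivative of the absolutely continuous part of α with respect to μ₁. That is, the Markov–Dobrushin overlap with a fixed measure is superadditive (concave) under mixtures. -/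
open MeasureTheory
open scoped ENNReal

/-- Every measurable set `A` bounds the overlap of `α` and `μ` by `α A + μ Aᶜ`. -/
lemma lintegral_min_rnDeriv_one_le {E : Type*} [MeasurableSpace E] (α μ : Measure E)
    {A : Set E} (hA : MeasurableSet A) :
    ∫⁻ x, min (α.rnDeriv μ x) 1 ∂μ ≤ α A + μ Aᶜ := by
  rw [← lintegral_add_compl _ hA]
  gcongr
  · exact (lintegral_mono fun x => min_le_left _ _).trans (Measure.setLIntegral_rnDeriv_le A)
  · exact (lintegral_mono fun x => min_le_right _ _).trans (setLIntegral_one _).le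

/-- The bound `α A + μ Aᶜ` on the overlap of `α` and `μ` is attained by some measurable set. -/
lemma exists_measure_add_measure_compl_le_lintegral_min_rnDeriv_one {E : Type*}
    [MeasurableSpace E] (α μ : Measure E) [α.HaveLebesgueDecomposition μ] :
    ∃ A, MeasurableSet A ∧ α A + μ Aᶜ ≤ ∫⁻ x, min (α.rnDeriv μ x) 1 ∂μ := by
  obtain ⟨S, hS, hαS, hμS⟩ := Measure.mutuallySingular_singularPart α μ
  have hf : MeasurableSet {x | α.rnDeriv μ x < 1} :=
    measurableSet_lt (Measure.measurable_rnDeriv α μ) measurable_const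
  have hA := hS.inter hf
  refine ⟨S ∩ {x | α.rnDeriv μ x < 1}, hA, ?_⟩
  rw [← lintegral_add_compl _ hA]
  refine add_le_add ?_ ?_
  · have hsing : α.singularPart μ (S ∩ {x | α.rnDeriv μ x < 1}) = 0 :=
      measure_mono_null Set.inter_subset_left hαS
    have hdecomp := congrArg (fun m : Measure E => m (S ∩ {x | α.rnDeriv μ x < 1}))
      (Measure.haveLebesgueDecomposition_add α μ)
    rw [hdecomp, Measure.add_apply, hsing, zero_add, withDensity_apply _ hA]
    exact setLIntegral_mono' hA fun x hx => le_min le_rfl hx.2.le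
  · rw [← setLIntegral_one]
    refine setLIntegral_mono_ae' hA.compl ?_
    have hS_ae : ∀ᵐ x ∂μ, x ∈ S := hμS
    filter_upwards [hS_ae] with x hxS hx
    exact le_min (not_lt.1 fun h => hx ⟨hxS, h⟩) le_rfl

/-- The Markov–Dobrushin overlap with a fixed probability measure `μ₁` is superadditive
(concave) under mixtures: for a Markov kernel `η` from `Z` to `E` and a probability measure
`ν` on `Z`, the overlap of the mixture `νη = ∫ η(z,·) ν(dz)` with `μ₁` dominates the mixture
of the overlaps. Here `dα/dμ₁` is the Radon–Nikodym derivative of the absolutely continuous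
part of `α` with respect to `μ₁`. -/
theorem markov_dobrushin_overlap_superadditive_under_mixture
    {Z E : Type*} [MeasurableSpace Z] [MeasurableSpace E]
    (η : ProbabilityTheory.Kernel Z E) [ProbabilityTheory.IsMarkovKernel η]
    (ν : Measure Z) [IsProbabilityMeasure ν]
    (μ₁ : Measure E) [IsProbabilityMeasure μ₁] :
    ∫⁻ z, (∫⁻ x, min ((η z).rnDeriv μ₁ x) 1 ∂μ₁) ∂ν ≤
      ∫⁻ x, min ((ν.bind (fun z => η z)).rnDeriv μ₁ x) 1 ∂μ₁ := by
  have : IsProbabilityMeasure (ν.bind (fun z => η z)) :=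
    inferInstanceAs (IsProbabilityMeasure (ν.bind η))
  obtain ⟨A, hA, hle⟩ :=
    exists_measure_add_measure_compl_le_lintegral_min_rnDeriv_one (ν.bind (fun z => η z)) μ₁
  calc ∫⁻ z, (∫⁻ x, min ((η z).rnDeriv μ₁ x) 1 ∂μ₁) ∂ν
      ≤ ∫⁻ z, (η z A + μ₁ Aᶜ) ∂ν :=
        lintegral_mono fun z => lintegral_min_rnDeriv_one_le (η z) μ₁ hA
    _ = ν.bind (fun z => η z) A + μ₁ Aᶜ := by
        rw [lintegral_add_right _ measurable_const, lintegral_const, measure_univ, mul_one,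
          Measure.bind_apply hA η.measurable.aemeasurable]
    _ ≤ _ := hle
end

section
/- Let ν⁰ be a finite measure on a measurable space (E, ℰ), and let (μ_n)_{n∈ℕ} and (μ′_n)_{n∈ℕ} be sequences of finite measures, all absolutely continuous with respect to ν⁰, such that for every measurable set A the sequences μ_n(A) and μ′_n(A) are nondecreasing in n and converge to μ(A) and μ′(A) respectively, where μ and μ′ are finite measures absolutely continuous with respect to ν⁰. Then ∫_E min(dμ_n/dν⁰, dμ′_n/dν⁰) dν⁰ → ∫_E min(dμ/dν⁰, dμ′/dν⁰) dν⁰ as n → ∞. -/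
open MeasureTheory Filter
open scoped ENNReal

namespace MeasureTheory.Measure

variable {E : Type*} [MeasurableSpace E] {ν : Measure E} [SigmaFinite ν] {μseq : ℕ → Measure E}

/-- Densities of a setwise monotone sequence of dominated measures are a.e. monotone. -/
theorem ae_monotone_rnDeriv_of_setwise_monotone
    [∀ n, HaveLebesgueDecomposition (μseq n) ν] (hseq : ∀ n, μseq n ≪ ν)
    (hmono : ∀ A : Set E, MeasurableSet A → Monotone fun n => μseq n A) :
    ∀ᵐ x ∂ν, Monotone fun n => (μseq n).rnDeriv ν x := by
  have h : ∀ n, (μseq n).rnDeriv ν ≤ᵐ[ν] (μseq (n + 1)).rnDeriv ν := fun n =>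
    ae_le_of_forall_setLIntegral_le_of_sigmaFinite (measurable_rnDeriv _ _) fun s hs _ => by
      rw [setLIntegral_rnDeriv (hseq n), setLIntegral_rnDeriv (hseq (n + 1))]
      exact hmono s hs n.le_succ
  filter_upwards [ae_all_iff.2 h] with x hx using monotone_nat_of_le_succ hx

/-- Densities of a sequence of dominated measures increasing setwise to a dominated measure
converge a.e. to the density of the limit. -/
theorem ae_tendsto_rnDeriv_of_setwise_monotone
    [∀ n, HaveLebesgueDecomposition (μseq n) ν] {μ : Measure E} [HaveLebesgueDecomposition μ ν]
    (hseq : ∀ n, μseq n ≪ ν) (hμ : μ ≪ ν)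
    (hmono : ∀ A : Set E, MeasurableSet A → Monotone fun n => μseq n A)
    (hlim : ∀ A : Set E, MeasurableSet A →
      Tendsto (fun n => μseq n A) atTop (nhds (μ A))) :
    ∀ᵐ x ∂ν, Tendsto (fun n => (μseq n).rnDeriv ν x) atTop (nhds (μ.rnDeriv ν x)) := by
  have hm := ae_monotone_rnDeriv_of_setwise_monotone hseq hmono
  have hsup : (fun x => ⨆ n, (μseq n).rnDeriv ν x) =ᵐ[ν] μ.rnDeriv ν := by
    refine ae_eq_of_forall_setLIntegral_eq_of_sigmaFinite
      (.iSup fun n => measurable_rnDeriv _ _) (measurable_rnDeriv _ _) fun s hs _ => ?_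
    rw [lintegral_iSup' (fun n => (measurable_rnDeriv _ _).aemeasurable)
      (ae_restrict_of_ae hm), setLIntegral_rnDeriv hμ]
    simp_rw [setLIntegral_rnDeriv (hseq _)]
    exact tendsto_nhds_unique (tendsto_atTop_iSup (hmono s hs)) (hlim s hs)
  filter_upwards [hm, hsup] with x hx hxsup
  exact hxsup ▸ tendsto_atTop_iSup hx

end MeasureTheory.Measure

/-- If two sequences of finite measures dominated by a finite measure `ν⁰` increase setwise
to finite measures `μ` and `μ'` (also dominated by `ν⁰`), then the Markov–Dobrushin overlap
integrals `∫ min(dμₙ/dν⁰, dμ'ₙ/dν⁰) dν⁰` converge to `∫ min(dμ/dν⁰, dμ'/dν⁰) dν⁰`. -/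
theorem markov_dobrushin_overlap_tendsto_of_setwise_monotone
    {E : Type*} [MeasurableSpace E]
    (ν₀ : Measure E) [IsFiniteMeasure ν₀]
    (μseq μ'seq : ℕ → Measure E)
    [∀ n, IsFiniteMeasure (μseq n)] [∀ n, IsFiniteMeasure (μ'seq n)]
    (μ μ' : Measure E) [IsFiniteMeasure μ] [IsFiniteMeasure μ']
    (hseq : ∀ n, μseq n ≪ ν₀) (h'seq : ∀ n, μ'seq n ≪ ν₀)
    (hμ : μ ≪ ν₀) (hμ' : μ' ≪ ν₀)
    (hmono : ∀ A : Set E, MeasurableSet A → Monotone fun n => μseq n A)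
    (h'mono : ∀ A : Set E, MeasurableSet A → Monotone fun n => μ'seq n A)
    (hlim : ∀ A : Set E, MeasurableSet A →
      Tendsto (fun n => μseq n A) atTop (nhds (μ A)))
    (h'lim : ∀ A : Set E, MeasurableSet A →
      Tendsto (fun n => μ'seq n A) atTop (nhds (μ' A))) :
    Tendsto (fun n => ∫⁻ x, min ((μseq n).rnDeriv ν₀ x) ((μ'seq n).rnDeriv ν₀ x) ∂ν₀)
      atTop (nhds (∫⁻ x, min (μ.rnDeriv ν₀ x) (μ'.rnDeriv ν₀ x) ∂ν₀)) := by
  refine lintegral_tendsto_of_tendsto_of_monotone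
    (fun n => ((Measure.measurable_rnDeriv _ _).min (Measure.measurable_rnDeriv _ _)).aemeasurable)
    ?_ ?_
  · filter_upwards [Measure.ae_monotone_rnDeriv_of_setwise_monotone hseq hmono,
      Measure.ae_monotone_rnDeriv_of_setwise_monotone h'seq h'mono] with x hx hx'
    exact hx.min hx'
  · filter_upwards [Measure.ae_tendsto_rnDeriv_of_setwise_monotone hseq hμ hmono hlim,
      Measure.ae_tendsto_rnDeriv_of_setwise_monotone h'seq hμ' h'mono h'lim] with x hx hx'
    exact hx.min hx'
end
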